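/- arXiv:1105.5910 — 2 statements merged into one kernel-verified Lean document; each statement's English description precedes it below -/
import Mathlib

section
/- Let λ and μ be partitions and let i be an index such that (i, λ_i) is a removable node of λ (so λ_i > 0 and λ'_{λ_i} = i). Then the following identity holds in ℚ(q, Q_s, Q_t): (q^{λ_i−i} Q_s − q^{μ_1} Q_t) · ∏_{k=1}^{μ_1} (q^{λ_i−i} Q_s − q^{k−1−μ'_k} Q_t)/(q^{λ_i−i} Q_s − q^{k−μ'_k} Q_t) = q^{−μ'_{λ_i}} Q_t (q^{μ'_{λ_i} − i + 1} Q_s Q_t^{−1} − 1) · A · B, where A := ∏_{k=1}^{λ_i−1} (q^{λ_i−i+μ'_k−k+1} Q_s Q_t^{−1} − 1)/(q^{λ_i−i+μ'_k−k} Q_s Q_t^{−1} − 1) and B := ∏_{k=1}^{μ'_{λ_i}} (q^{μ_k−k+i−λ_i+1} Q_t Q_s^{−1} − 1)/(q^{μ_k−k+i−λ_i} Q_t Q_s^{−1} − 1). -/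
/-- A partition, encoded as a weakly decreasing, eventually-zero sequence of
natural numbers; `parts i` is the `(i+1)`-st part `λ_{i+1}` (0-indexed rows). -/
structure Ptn where
  parts : ℕ → ℕ
  antitone' : Antitone parts
  eventually_zero : ∃ N, ∀ i, N ≤ i → parts i = 0

namespace Ptn

/-- `conj p k` is the conjugate-partition part `λ'_{k+1} = #{i ≥ 1 : λ_i ≥ k+1}`. -/
noncomputable def conj (p : Ptn) (k : ℕ) : ℕ := Nat.card {i : ℕ // k < p.parts i}

/-- `|λ| = Σ_{i ≥ 1} λ_i`. -/
noncomputable def size (p : Ptn) : ℕ := ∑ᶠ i, p.parts i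

/-- `n(λ) = Σ_{i ≥ 1} (i-1) λ_i`. -/
noncomputable def nn (p : Ptn) : ℕ := ∑ᶠ i, i * p.parts i

/-- The empty partition. -/
def empty : Ptn := ⟨fun _ => 0, fun _ _ _ => le_rfl, ⟨0, fun _ _ => rfl⟩⟩

end Ptn

/-- The generalised hook length `h_{i,j}^{λ,μ} = λ_i - i + μ'_j - j + 1`, for the node
in (0-indexed) row `i` and column `j`, i.e. the 1-indexed node `(i+1, j+1)`. -/
noncomputable def ghook (lam mu : Ptn) (i j : ℕ) : ℤ :=
  (lam.parts i : ℤ) - (i + 1) + (mu.conj j : ℤ) - (j + 1) + 1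

/-- The rational function field `ℚ(q, Q_s, Q_t)` in three indeterminates. -/
noncomputable abbrev K3 : Type := FractionRing (MvPolynomial (Fin 3) ℚ)

/-- The indeterminate `q`. -/
noncomputable def q3 : K3 := algebraMap (MvPolynomial (Fin 3) ℚ) K3 (MvPolynomial.X 0)

/-- The indeterminate `Q_s`. -/
noncomputable def Qs3 : K3 := algebraMap (MvPolynomial (Fin 3) ℚ) K3 (MvPolynomial.X 1)

/-- The indeterminate `Q_t`. -/
noncomputable def Qt3 : K3 := algebraMap (MvPolynomial (Fin 3) ℚ) K3 (MvPolynomial.X 2)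

/-!
Write `f m = q^{λ_i-i} Q_s - q^m Q_t` and cut the diagram of `μ` along a vertical line. Multiply `f`
at the content where the cut leaves the diagram by the ratios of `f` across the feet of the columns
left of the cut and across the ends of the rows that cross it. Moving the cut from `a` to `a + 1`
trades the ratios of the rows of length exactly `a + 1`, which telescope, for the ratio of the new
column, so the product does not depend on the cut. A cut at `μ_1` crosses no row and gives the
left-hand side; the cut at `λ_i - 1` gives the right-hand side.
-/

namespace Ptn

theorem lt_conj_iff (p : Ptn) {a k : ℕ} : k < p.conj a ↔ a < p.parts k := by
  classical
  obtain ⟨N, hN⟩ := p.eventually_zero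
  have hex : ∃ n, p.parts n ≤ a := ⟨N, by simp [hN N le_rfl]⟩
  have lt_find_iff (i : ℕ) : i < Nat.find hex ↔ a < p.parts i := by
    rw [Nat.lt_find_iff]
    exact ⟨fun h => not_le.1 (h i le_rfl),
      fun h m hm => not_le.2 (h.trans_le (p.antitone' hm))⟩
  have conj_eq : p.conj a = Nat.find hex := by
    rw [conj, Nat.subtype_card (Finset.range (Nat.find hex)), Finset.card_range]
    exact fun i => Finset.mem_range.trans (lt_find_iff i)
  rw [conj_eq, lt_find_iff]

theorem conj_antitone (p : Ptn) : Antitone p.conj := fun _ _ hab =>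
  le_of_forall_lt fun _ hk => p.lt_conj_iff.2 (hab.trans_lt (p.lt_conj_iff.1 hk))

theorem conj_parts_zero (p : Ptn) : p.conj (p.parts 0) = 0 :=
  Nat.eq_zero_of_not_pos fun h => (p.lt_conj_iff.1 h).false

theorem parts_eq_succ_of_mem_Ico_conj (p : Ptn) {a k : ℕ}
    (hk : k ∈ Finset.Ico (p.conj (a + 1)) (p.conj a)) : p.parts k = a + 1 := by
  obtain ⟨hlow, hupp⟩ := Finset.mem_Ico.1 hk
  exact le_antisymm (not_lt.1 (mt p.lt_conj_iff.2 hlow.not_gt)) (p.lt_conj_iff.1 hupp)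

section CutProd

variable {G : Type*} [CommGroup G]

/-- The boundary product of `f` over the diagram of `p`, cut after the first `a` columns: the value
of `f` at the content where the cut leaves the diagram, times the ratios of `f` across the feet of
the columns left of the cut and across the ends of the rows that cross it. Rows and columns are
0-indexed, and `f` is evaluated at contents `column - row`. -/
noncomputable def cutProd (p : Ptn) (f : ℤ → G) (a : ℕ) : G :=
  f (a - p.conj a) *
    (∏ k ∈ Finset.range a, f (k - p.conj k) / f (k + 1 - p.conj k)) *
    ∏ k ∈ Finset.range (p.conj a), f (p.parts k - k) / f (p.parts k - k - 1)

theorem prod_Ico_conj_row_ratio (p : Ptn) (f : ℤ → G) (a : ℕ) :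
    ∏ k ∈ Finset.Ico (p.conj (a + 1)) (p.conj a), f (p.parts k - k) / f (p.parts k - k - 1) =
      f (a + 1 - p.conj (a + 1)) / f (a + 1 - p.conj a) := by
  have telescope := Finset.prod_Ico_div (fun k : ℕ => (f (a + 1 - k))⁻¹)
    (p.conj_antitone a.le_succ)
  rw [inv_div_inv] at telescope
  rw [← telescope]
  refine Finset.prod_congr rfl fun k hk => ?_
  rw [p.parts_eq_succ_of_mem_Ico_conj hk, inv_div_inv]
  push_cast
  rw [sub_sub]

theorem cutProd_succ (p : Ptn) (f : ℤ → G) (a : ℕ) : p.cutProd f (a + 1) = p.cutProd f a := by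
  rw [cutProd, cutProd, ← Finset.prod_range_mul_prod_Ico _ (p.conj_antitone a.le_succ),
    p.prod_Ico_conj_row_ratio, Finset.prod_range_succ]
  push_cast
  simp only [div_eq_mul_inv]
  ac_rfl

theorem cutProd_eq_cutProd (p : Ptn) (f : ℤ → G) (a b : ℕ) : p.cutProd f a = p.cutProd f b := by
  have eq_zero (n : ℕ) : p.cutProd f n = p.cutProd f 0 := by
    induction n with
    | zero => rfl
    | succ n ih => rw [p.cutProd_succ, ih]
  rw [eq_zero a, eq_zero b]

end CutProd

theorem mul_prod_column_ratio_eq_cut {K : Type*} [CommGroupWithZero K]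
    (p : Ptn) {f : ℤ → K} (hf : ∀ m, f m ≠ 0) (a : ℕ) :
    f (p.parts 0) * ∏ k ∈ Finset.range (p.parts 0), f (k - p.conj k) / f (k + 1 - p.conj k) =
      f (a - p.conj a) *
        (∏ k ∈ Finset.range a, f (k - p.conj k) / f (k + 1 - p.conj k)) *
        ∏ k ∈ Finset.range (p.conj a), f (p.parts k - k) / f (p.parts k - k - 1) := by
  have cut_eq := congrArg Units.val
    (p.cutProd_eq_cutProd (fun m => Units.mk0 (f m) (hf m)) (p.parts 0) a)
  simpa [cutProd, conj_parts_zero] using cut_eq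

end Ptn

section Factors

variable {K : Type*} [Field K] {q s t : K}

theorem zpow_mul_sub_zpow_mul_ne_zero (hq : q ≠ 0) (hst : ∀ m : ℤ, s ≠ q ^ m * t) (e m : ℤ) :
    q ^ e * s - q ^ m * t ≠ 0 := by
  intro h
  apply hst (m - e)
  rw [zpow_sub₀ hq]
  field_simp
  linear_combination h

theorem zpow_mul_mul_inv_sub_one_eq (hq : q ≠ 0) (ht : t ≠ 0) (e m : ℤ) :
    q ^ m * s * t⁻¹ - 1 = q ^ (m - e) * t⁻¹ * (q ^ e * s - q ^ (e - m) * t) := by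
  rw [zpow_sub₀ hq, zpow_sub₀ hq]
  field_simp

theorem column_ratio_eq (hq : q ≠ 0) (ht : t ≠ 0) (e m : ℤ) :
    (q ^ (m + 1) * s * t⁻¹ - 1) / (q ^ m * s * t⁻¹ - 1) =
      q * ((q ^ e * s - q ^ (e - m - 1) * t) / (q ^ e * s - q ^ (e - m) * t)) := by
  have hne : q ^ (m - e) * t⁻¹ ≠ 0 := mul_ne_zero (zpow_ne_zero _ hq) (inv_ne_zero ht)
  rw [zpow_mul_mul_inv_sub_one_eq hq ht e (m + 1), zpow_mul_mul_inv_sub_one_eq hq ht e m,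
    add_sub_right_comm, zpow_add_one₀ hq, ← sub_sub, mul_right_comm _ q, mul_assoc _ q,
    mul_div_mul_left _ _ hne, mul_div_assoc]

theorem row_ratio_eq (hq : q ≠ 0) (hs : s ≠ 0) (e m : ℤ) :
    (q ^ (m + 1) * t * s⁻¹ - 1) / (q ^ m * t * s⁻¹ - 1) =
      (q ^ e * s - q ^ (m + e + 1) * t) / (q ^ e * s - q ^ (m + e) * t) := by
  have hne : -(q ^ e * s) ≠ 0 := neg_ne_zero.2 (mul_ne_zero (zpow_ne_zero _ hq) hs)
  rw [← mul_div_mul_left _ _ hne, zpow_add_one₀ hq (m + e), zpow_add₀ hq m e, zpow_add_one₀ hq]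
  congr 1 <;> field_simp <;> ring

theorem prod_column_ratio_eq (hq : q ≠ 0) (ht : t ≠ 0) (e : ℤ) (d : ℕ → ℤ) (n : ℕ) :
    ∏ k ∈ Finset.range n, (q ^ (e + d k - (k + 1) + 1) * s * t⁻¹ - 1) /
        (q ^ (e + d k - (k + 1)) * s * t⁻¹ - 1) =
      q ^ n * ∏ k ∈ Finset.range n,
        (q ^ e * s - q ^ (k - d k) * t) / (q ^ e * s - q ^ (k + 1 - d k) * t) := by
  rw [Finset.pow_eq_prod_const, ← Finset.prod_mul_distrib]
  refine Finset.prod_congr rfl fun k _ => ?_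
  rw [column_ratio_eq hq ht e]
  ring_nf

theorem prod_row_ratio_eq (hq : q ≠ 0) (hs : s ≠ 0) (a i : ℤ) (d : ℕ → ℤ) (n : ℕ) :
    ∏ k ∈ Finset.range n, (q ^ (d k - (k + 1) + i - a + 1) * t * s⁻¹ - 1) /
        (q ^ (d k - (k + 1) + i - a) * t * s⁻¹ - 1) =
      ∏ k ∈ Finset.range n, (q ^ (a - i) * s - q ^ (d k - k) * t) /
        (q ^ (a - i) * s - q ^ (d k - k - 1) * t) := by
  refine Finset.prod_congr rfl fun k _ => ?_
  rw [row_ratio_eq hq hs (a - i)]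
  congr 4 <;> ring

theorem corner_factor_eq (hq : q ≠ 0) (ht : t ≠ 0) (a b e : ℤ) :
    q ^ (-b) * t * (q ^ (b + e - a) * s * t⁻¹ - 1) =
      q ^ (-a) * (q ^ e * s - q ^ (a - b) * t) := by
  rw [zpow_sub₀ hq, zpow_sub₀ hq, zpow_add₀ hq, zpow_neg, zpow_neg]
  field_simp

end Factors

theorem stmt4_general {K : Type*} [Field K] {q s t : K} (hq : q ≠ 0) (hs : s ≠ 0) (ht : t ≠ 0)
    (hst : ∀ m : ℤ, s ≠ q ^ m * t) (mu : Ptn) {a : ℕ} (ha : 0 < a) (i : ℤ) :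
    (q ^ ((a : ℤ) - i) * s - q ^ (mu.parts 0 : ℤ) * t) *
      ∏ k ∈ Finset.range (mu.parts 0),
        (q ^ ((a : ℤ) - i) * s - q ^ ((k : ℤ) + 1 - 1 - mu.conj k) * t) /
          (q ^ ((a : ℤ) - i) * s - q ^ ((k : ℤ) + 1 - mu.conj k) * t) =
      q ^ (-(mu.conj (a - 1) : ℤ)) * t * (q ^ ((mu.conj (a - 1) : ℤ) - i + 1) * s * t⁻¹ - 1) *
        (∏ k ∈ Finset.range (a - 1),
          (q ^ ((a : ℤ) - i + mu.conj k - (k + 1) + 1) * s * t⁻¹ - 1) /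
            (q ^ ((a : ℤ) - i + mu.conj k - (k + 1)) * s * t⁻¹ - 1)) *
        ∏ k ∈ Finset.range (mu.conj (a - 1)),
          (q ^ ((mu.parts k : ℤ) - (k + 1) + i - a + 1) * t * s⁻¹ - 1) /
            (q ^ ((mu.parts k : ℤ) - (k + 1) + i - a) * t * s⁻¹ - 1) := by
  obtain ⟨c, rfl⟩ := Nat.exists_eq_add_one.2 ha
  have cut_eq := mu.mul_prod_column_ratio_eq_cut
    (zpow_mul_sub_zpow_mul_ne_zero hq hst (((c + 1 : ℕ) : ℤ) - i)) c
  have corner_exponent : (mu.conj c : ℤ) - i + 1 = mu.conj c + (((c + 1 : ℕ) : ℤ) - i) - c := by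
    push_cast
    ring
  have q_cancel : q ^ (-(c : ℤ)) * q ^ c = 1 := by
    rw [zpow_neg, zpow_natCast, inv_mul_cancel₀ (pow_ne_zero c hq)]
  simp only [add_sub_cancel_right, Nat.add_sub_cancel]
  rw [cut_eq, corner_exponent, corner_factor_eq hq ht,
    prod_column_ratio_eq hq ht _ fun k => (mu.conj k : ℤ),
    prod_row_ratio_eq hq hs _ _ fun k => (mu.parts k : ℤ),
    mul_mul_mul_comm, q_cancel, one_mul]

theorem q3_ne_zero : q3 ≠ 0 := by
  simp [q3, MvPolynomial.X_ne_zero]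

theorem Qs3_ne_zero : Qs3 ≠ 0 := by
  simp [Qs3, MvPolynomial.X_ne_zero]

theorem Qt3_ne_zero : Qt3 ≠ 0 := by
  simp [Qt3, MvPolynomial.X_ne_zero]

theorem Qs3_ne_q3_zpow_mul_Qt3 (m : ℤ) : Qs3 ≠ q3 ^ m * Qt3 := by
  have pow_mul_Qs3_ne (a b : ℕ) : q3 ^ a * Qs3 ≠ q3 ^ b * Qt3 := by
    simp only [q3, Qs3, Qt3, ← map_pow, ← map_mul]
    refine (IsFractionRing.injective (MvPolynomial (Fin 3) ℚ) K3).ne fun h => ?_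
    simpa using congrArg (MvPolynomial.eval ![1, 1, 0]) h
  obtain ⟨n, rfl | rfl⟩ := m.eq_nat_or_neg
  · simpa using pow_mul_Qs3_ne 0 n
  · rw [zpow_neg, zpow_natCast, ne_eq, eq_inv_mul_iff_mul_eq₀ (pow_ne_zero n q3_ne_zero)]
    simpa using pow_mul_Qs3_ne n 0

/-- Let `λ, μ` be partitions and let `(i, λ_i)` be a removable node of `λ`
(here `i = i0 + 1` is the 1-indexed row, so removability means `λ_{i0+1} > 0` and
`λ_{i0+2} < λ_{i0+1}`; equivalently `λ_i > 0` and `λ'_{λ_i} = i`). Then, in `ℚ(q,Q_s,Q_t)`: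
`(q^{λ_i-i}Q_s - q^{μ_1}Q_t) ∏_{k=1}^{μ_1} (q^{λ_i-i}Q_s - q^{k-1-μ'_k}Q_t)/(q^{λ_i-i}Q_s - q^{k-μ'_k}Q_t)
 = q^{-μ'_{λ_i}} Q_t (q^{μ'_{λ_i}-i+1} Q_s Q_t⁻¹ - 1) · A · B`. -/
theorem stmt4 (lam mu : Ptn) (i0 : ℕ) (hpos : 0 < lam.parts i0)
    (hrem : lam.parts (i0 + 1) < lam.parts i0) :
    (q3 ^ ((lam.parts i0 : ℤ) - (i0 + 1)) * Qs3 - q3 ^ (mu.parts 0 : ℤ) * Qt3) *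
      ∏ k ∈ Finset.range (mu.parts 0),
        (q3 ^ ((lam.parts i0 : ℤ) - (i0 + 1)) * Qs3 -
            q3 ^ (((k : ℤ) + 1) - 1 - (mu.conj k : ℤ)) * Qt3) /
          (q3 ^ ((lam.parts i0 : ℤ) - (i0 + 1)) * Qs3 -
            q3 ^ (((k : ℤ) + 1) - (mu.conj k : ℤ)) * Qt3)
    = q3 ^ (-(mu.conj (lam.parts i0 - 1) : ℤ)) * Qt3 *
        (q3 ^ ((mu.conj (lam.parts i0 - 1) : ℤ) - (i0 + 1) + 1) * Qs3 * Qt3⁻¹ - 1) *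
      (∏ k ∈ Finset.range (lam.parts i0 - 1),
        (q3 ^ ((lam.parts i0 : ℤ) - (i0 + 1) + (mu.conj k : ℤ) - ((k : ℤ) + 1) + 1) *
            Qs3 * Qt3⁻¹ - 1) /
          (q3 ^ ((lam.parts i0 : ℤ) - (i0 + 1) + (mu.conj k : ℤ) - ((k : ℤ) + 1)) *
            Qs3 * Qt3⁻¹ - 1)) *
      (∏ k ∈ Finset.range (mu.conj (lam.parts i0 - 1)),
        (q3 ^ ((mu.parts k : ℤ) - ((k : ℤ) + 1) + ((i0 : ℤ) + 1) - (lam.parts i0 : ℤ) + 1) *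
            Qt3 * Qs3⁻¹ - 1) /
          (q3 ^ ((mu.parts k : ℤ) - ((k : ℤ) + 1) + ((i0 : ℤ) + 1) - (lam.parts i0 : ℤ)) *
            Qt3 * Qs3⁻¹ - 1)) :=
  stmt4_general q3_ne_zero Qs3_ne_zero Qt3_ne_zero Qs3_ne_q3_zpow_mul_Qt3 mu hpos (i0 + 1)
end

section
/- Let r be a positive integer, r_0, …, r_{l−1} integers, m_s := r_s/r, and η_l := exp(2π√(−1)/l). Let λ = (λ^0, …, λ^{l−1}) be an l-partition of n, and let θ(s_λ) ∈ ℚ(η_l)(u) be the rational function obtained by substituting q = u^r and Q_j = η_l^j u^{r_j} (j = 0, …, l−1) into the cancellation-free Schur element formula s_λ(q) = (−1)^{n(l−1)} q^{−n(λ̄)} (q−1)^{−n} ∏_{s=0}^{l−1} ∏_{(i,j)∈[λ^s]} ∏_{t=0}^{l−1} (q^{h_{i,j}^{λ^s,λ^t}} Q_s Q_t^{−1} − 1). Then θ(s_λ) is nonzero and its order of vanishing at u = 0 (its u-adic valuation) equals −r( n(λ̄) − Σ_{s=0}^{l−1} Σ_{(i,j)∈[λ^s]} Σ_{0≤t≤l−1,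 t≠s} min(h_{i,j}^{λ^s,λ^t} + m_s − m_t, 0) ). Equivalently, the a-value a^{(m,r)}(λ), defined as the negative of this valuation, equals r( n(λ̄) − Σ_{s=0}^{l−1} Σ_{(i,j)∈[λ^s]} Σ_{t≠s} min(h_{i,j}^{λ^s,λ^t} + m_s − m_t, 0) ). -/
/-- `η_l = exp(2π√-1/l)`. -/
noncomputable def etaRoot (l : ℕ) : ℂ := Complex.exp (2 * (Real.pi : ℂ) * Complex.I / (l : ℂ))

/-!
For any valuation with `v u < 1`, the ultrametric inequality gives
`v (c * u ^ e - 1) = max (v u ^ e) 1 = v u ^ min e 0` whenever `v c = 1`, unless `e = 0` and `c`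
reduces to `1`. Every factor of the Schur element has this shape: for `s ≠ t` the coefficient
`ζ_s / ζ_t` does not reduce to `1`, and for `s = t` the exponent is `r` times an ordinary hook length,
hence positive. Multiplying the factors adds up the exponents `min e 0`, and the diagonal ones vanish.
-/

namespace Ptn

/-- The set of nodes `[λ]` of a partition, with rows and columns indexed from `0`. The bound on the
row index is immaterial, since the rows beyond it are empty. -/
noncomputable def nodes (p : Ptn) : Finset (Σ _ : ℕ, ℕ) :=
  (Finset.range p.eventually_zero.choose).sigma fun i => Finset.range (p.parts i)

theorem lt_parts_of_mem_nodes {p : Ptn} {x : Σ _ : ℕ, ℕ} (hx : x ∈ p.nodes) :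
    x.2 < p.parts x.1 :=
  Finset.mem_range.mp (Finset.mem_sigma.mp hx).2

@[to_additive]
theorem finprod_prod_range_parts {M : Type*} [CommMonoid M] (p : Ptn) (f : ℕ → ℕ → M) :
    ∏ᶠ i, ∏ j ∈ Finset.range (p.parts i), f i j = ∏ x ∈ p.nodes, f x.1 x.2 := by
  rw [nodes, ← Finset.prod_sigma']
  refine finprod_eq_prod_of_mulSupport_subset _ fun i hi => ?_
  by_contra hN
  have hzero : p.parts i = 0 := p.eventually_zero.choose_spec i (by simpa using hN)
  exact hi (by simp only [hzero, Finset.range_zero, Finset.prod_empty])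

theorem finite_setOf_lt_parts (p : Ptn) (j : ℕ) : {i | j < p.parts i}.Finite := by
  obtain ⟨N, hN⟩ := p.eventually_zero
  refine (Set.finite_lt_nat N).subset fun i hi => ?_
  contrapose! hi
  simp [hN i (by simpa using hi)]

theorem lt_conj_of_lt_parts {p : Ptn} {i j : ℕ} (h : j < p.parts i) : i < p.conj j :=
  calc
    i < (Set.Iic i).ncard := by simp
    _ ≤ {k | j < p.parts k}.ncard :=
      Set.ncard_le_ncard (fun _ hk => h.trans_le (p.antitone' hk)) (p.finite_setOf_lt_parts j)

end Ptn

theorem ghook_self_pos {p : Ptn} {i j : ℕ} (h : j < p.parts i) : 0 < ghook p p i j := by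
  have := Ptn.lt_conj_of_lt_parts h
  unfold ghook
  omega

theorem prod_zpow_eq_zpow_sum {ι G₀ : Type*} [CommGroupWithZero G₀] {a : G₀} (ha : a ≠ 0)
    (s : Finset ι) (f : ι → ℤ) : ∏ i ∈ s, a ^ f i = a ^ ∑ i ∈ s, f i := by
  classical
  induction s using Finset.induction_on with
  | empty => simp
  | insert i s hi ih => rw [Finset.prod_insert hi, Finset.sum_insert hi, ih, zpow_add₀ ha]

/-- The Schur element `s_λ(q)` of the Ariki–Koike algebra with parameters `Q`, in its
cancellation-free form, over any field. The argument `b` stands for the partition `λ̄`, and `ι` for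
the index set `{0, …, l - 1}`. -/
noncomputable def schurElement {ι F : Type*} [Fintype ι] [Field F] (Λ : ι → Ptn) (b : Ptn)
    (q : F) (Q : ι → F) : F :=
  (-1) ^ ((∑ s, (Λ s).size) * (Fintype.card ι - 1)) * q ^ (-(b.nn : ℤ)) *
    (q - 1) ^ (-((∑ s, (Λ s).size : ℕ) : ℤ)) *
    ∏ s, ∏ x ∈ (Λ s).nodes, ∏ t, (q ^ ghook (Λ s) (Λ t) x.1 x.2 * Q s * (Q t)⁻¹ - 1)

/-- The a-value `a^{(m,r)}(λ)` for `m_s = r_s / r`, with the denominators `r` cleared so that it is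
visibly an integer. The argument `b` stands for the partition `λ̄`. -/
noncomputable def aValue {ι : Type*} [Fintype ι] [DecidableEq ι] (Λ : ι → Ptn) (b : Ptn)
    (r : ℕ) (rv : ι → ℤ) : ℤ :=
  r * b.nn - ∑ s, ∑ x ∈ (Λ s).nodes, ∑ t ∈ Finset.univ.erase s,
    min (r * ghook (Λ s) (Λ t) x.1 x.2 + rv s - rv t) 0

theorem cast_aValue {ι : Type*} [Fintype ι] [DecidableEq ι] (Λ : ι → Ptn) (b : Ptn) {r : ℕ}
    (hr : 0 < r) {rv : ι → ℤ} {m : ι → ℚ} (hm : ∀ s, m s = rv s / r) :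
    (aValue Λ b r rv : ℚ) = r * (b.nn - ∑ s, ∑ x ∈ (Λ s).nodes, ∑ t ∈ Finset.univ.erase s,
      min (ghook (Λ s) (Λ t) x.1 x.2 + m s - m t) 0) := by
  have hr' : (r : ℚ) ≠ 0 := by positivity
  have hmr (s : ι) : (r : ℚ) * m s = rv s := by rw [hm, mul_div_cancel₀ _ hr']
  simp only [aValue, mul_sub, mul_add, Finset.mul_sum, mul_min_of_nonneg _ _ r.cast_nonneg, hmr,
    mul_zero]
  push_cast
  rfl

section Valuation

variable {F Γ₀ : Type*} [Field F] [LinearOrderedCommGroupWithZero Γ₀] (v : Valuation F Γ₀)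

theorem valuation_mul_zpow_sub_one {c u : F} (hc : v c = 1) (hu₀ : u ≠ 0) (hu : v u < 1) {e : ℤ}
    (h : e = 0 → v (c - 1) = 1) : v (c * u ^ e - 1) = v u ^ min e 0 := by
  have hpos : 0 < v u := v.pos_iff.mpr hu₀
  have hterm : v (c * u ^ e) = v u ^ e := by rw [map_mul, hc, one_mul, map_zpow₀]
  rcases lt_trichotomy e 0 with he | rfl | he
  · have hlt : v 1 < v (c * u ^ e) := by
      rw [hterm, map_one]
      exact one_lt_zpow_of_neg₀ hpos hu he
    rw [v.map_sub_eq_of_lt_left hlt, hterm, min_eq_left he.le]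
  · simpa using h rfl
  · have hlt : v (c * u ^ e) < v 1 := by
      rw [hterm, map_one]
      exact zpow_lt_one₀ hpos hu he
    rw [v.map_sub_eq_of_lt_right hlt, map_one, min_eq_right he.le, zpow_zero]

variable {ι : Type*} {u : F} {r : ℕ} {ζ : ι → F} (rv : ι → ℤ) (Λ : ι → Ptn)

theorem valuation_schurElement_factor (hu₀ : u ≠ 0) (hu : v u < 1) (hr : 0 < r)
    (hζ : ∀ s, v (ζ s) = 1) (hsep : Pairwise fun s t => v (ζ s - ζ t) = 1) (s t : ι) {i j : ℕ}
    (hj : j < (Λ s).parts i) :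
    v ((u ^ (r : ℤ)) ^ ghook (Λ s) (Λ t) i j * (ζ s * u ^ rv s) * (ζ t * u ^ rv t)⁻¹ - 1) =
      v u ^ min (r * ghook (Λ s) (Λ t) i j + rv s - rv t) 0 := by
  have hfactor : (u ^ (r : ℤ)) ^ ghook (Λ s) (Λ t) i j * (ζ s * u ^ rv s) * (ζ t * u ^ rv t)⁻¹ =
      ζ s * (ζ t)⁻¹ * u ^ (r * ghook (Λ s) (Λ t) i j + rv s - rv t) := by
    rw [zpow_sub₀ hu₀, zpow_add₀ hu₀, zpow_mul]
    ring
  rw [hfactor]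
  refine valuation_mul_zpow_sub_one v (by simp [hζ]) hu₀ hu fun he => ?_
  have hst : s ≠ t := by
    rintro rfl
    have := mul_pos (Nat.cast_pos.mpr hr) (ghook_self_pos hj)
    omega
  have hζt : ζ t ≠ 0 := v.ne_zero_iff.mp (by simp [hζ])
  rw [← div_eq_mul_inv, div_sub_one hζt, map_div₀, hsep hst, hζ, div_one]

theorem valuation_prod_schurElement_factor [Fintype ι] [DecidableEq ι] (hu₀ : u ≠ 0)
    (hu : v u < 1) (hr : 0 < r) (hζ : ∀ s, v (ζ s) = 1)
    (hsep : Pairwise fun s t => v (ζ s - ζ t) = 1) (s : ι) {i j : ℕ} (hj : j < (Λ s).parts i) :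
    v (∏ t, ((u ^ (r : ℤ)) ^ ghook (Λ s) (Λ t) i j * (ζ s * u ^ rv s) * (ζ t * u ^ rv t)⁻¹ - 1)) =
      v u ^ ∑ t ∈ Finset.univ.erase s, min (r * ghook (Λ s) (Λ t) i j + rv s - rv t) 0 := by
  have hdiag : min (r * ghook (Λ s) (Λ s) i j + rv s - rv s) 0 = 0 := by
    have := ghook_self_pos hj
    exact min_eq_right (by rw [add_sub_cancel_right]; positivity)
  calc
    _ = ∏ t, v u ^ min (r * ghook (Λ s) (Λ t) i j + rv s - rv t) 0 := by
      rw [map_prod]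
      exact Finset.prod_congr rfl fun t _ =>
        valuation_schurElement_factor v rv Λ hu₀ hu hr hζ hsep s t hj
    _ = v u ^ ∑ t, min (r * ghook (Λ s) (Λ t) i j + rv s - rv t) 0 :=
      prod_zpow_eq_zpow_sum (v.ne_zero_iff.mpr hu₀) _ _
    _ = _ := by rw [← Finset.add_sum_erase _ _ (Finset.mem_univ s), hdiag, zero_add]

theorem valuation_schurElement [Fintype ι] [DecidableEq ι] (b : Ptn) (hu₀ : u ≠ 0) (hu : v u < 1)
    (hr : 0 < r) (hζ : ∀ s, v (ζ s) = 1) (hsep : Pairwise fun s t => v (ζ s - ζ t) = 1) :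
    v (schurElement Λ b (u ^ (r : ℤ)) fun s => ζ s * u ^ rv s) = v u ^ (-aValue Λ b r rv) := by
  have hvu : v u ≠ 0 := v.ne_zero_iff.mpr hu₀
  have hsign (k : ℕ) : v ((-1) ^ k) = 1 := by rw [map_pow, v.map_neg, map_one, one_pow]
  have hq : v (u ^ (r : ℤ) - 1) = 1 := by
    simpa using valuation_mul_zpow_sub_one v v.map_one hu₀ hu (e := r) (by omega)
  have hprod : v (∏ s, ∏ x ∈ (Λ s).nodes, ∏ t, ((u ^ (r : ℤ)) ^ ghook (Λ s) (Λ t) x.1 x.2 *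
        (ζ s * u ^ rv s) * (ζ t * u ^ rv t)⁻¹ - 1)) =
      v u ^ ∑ s, ∑ x ∈ (Λ s).nodes, ∑ t ∈ Finset.univ.erase s,
        min (r * ghook (Λ s) (Λ t) x.1 x.2 + rv s - rv t) 0 := by
    rw [map_prod, ← prod_zpow_eq_zpow_sum hvu]
    refine Finset.prod_congr rfl fun s _ => ?_
    rw [map_prod, ← prod_zpow_eq_zpow_sum hvu]
    exact Finset.prod_congr rfl fun x hx => valuation_prod_schurElement_factor v rv Λ hu₀ hu hr hζ
      hsep s (Ptn.lt_parts_of_mem_nodes hx)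
  rw [schurElement, map_mul, map_mul, map_mul, hsign, map_zpow₀ v (_ - 1), hq, hprod, one_zpow,
    one_mul, mul_one, ← zpow_mul, map_zpow₀, ← zpow_add₀ hvu, aValue]
  congr 1
  ring

end Valuation

section RatFunc

open Polynomial

variable {K : Type*} [Field K]

theorem valuation_idealX_algebraMap_eq_one_iff {p : K[X]} :
    (idealX K).valuation (RatFunc K) (algebraMap K[X] (RatFunc K) p) = 1 ↔ p.coeff 0 ≠ 0 := by
  rw [IsDedekindDomain.HeightOneSpectrum.valuation_eq_one_iff_notMem, idealX_span,
    Ideal.mem_span_singleton, X_dvd_iff]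

theorem valuation_idealX_C {c : K} (hc : c ≠ 0) :
    (idealX K).valuation (RatFunc K) (RatFunc.C c) = 1 := by
  rw [← RatFunc.algebraMap_C, valuation_idealX_algebraMap_eq_one_iff, coeff_C_zero]
  exact hc

theorem coeff_zero_num_denom_ne_zero {f : RatFunc K}
    (hf : (idealX K).valuation (RatFunc K) f = 1) :
    f.num.coeff 0 ≠ 0 ∧ f.denom.coeff 0 ≠ 0 := by
  have heq := hf
  rw [← RatFunc.num_div_denom f, map_div₀] at heq
  have hiff : f.num.coeff 0 ≠ 0 ↔ f.denom.coeff 0 ≠ 0 := by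
    rw [← valuation_idealX_algebraMap_eq_one_iff, eq_of_div_eq_one heq,
      valuation_idealX_algebraMap_eq_one_iff]
  have hcoprime : ¬(f.num.coeff 0 = 0 ∧ f.denom.coeff 0 = 0) := fun ⟨hnum, hdenom⟩ =>
    not_isUnit_X <| f.isCoprime_num_denom.isUnit_of_dvd' (X_dvd_iff.mpr hnum) (X_dvd_iff.mpr hdenom)
  tauto

theorem exists_eq_X_zpow_mul_div_of_valuation_eq {f : RatFunc K} {n : ℤ}
    (hf : (idealX K).valuation (RatFunc K) f = (idealX K).valuation (RatFunc K) RatFunc.X ^ n) :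
    ∃ a c : K[X], a.coeff 0 ≠ 0 ∧ c.coeff 0 ≠ 0 ∧
      f = RatFunc.X ^ n * (algebraMap K[X] (RatFunc K) a / algebraMap K[X] (RatFunc K) c) := by
  have hX : (RatFunc.X : RatFunc K) ^ n ≠ 0 := zpow_ne_zero n RatFunc.X_ne_zero
  have hunit : (idealX K).valuation (RatFunc K) (f / RatFunc.X ^ n) = 1 := by
    rw [map_div₀, map_zpow₀, hf, ← map_zpow₀, div_self ((Valuation.ne_zero_iff _).mpr hX)]
  obtain ⟨hnum, hdenom⟩ := coeff_zero_num_denom_ne_zero hunit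
  exact ⟨_, _, hnum, hdenom, by rw [RatFunc.num_div_denom, mul_div_cancel₀ _ hX]⟩

theorem stmt10_general {ι : Type*} [Fintype ι] [DecidableEq ι] {r : ℕ} (hr : 0 < r)
    {ζ : ι → K} (hζ₀ : ∀ s, ζ s ≠ 0) (hζ : Function.Injective ζ) {rv : ι → ℤ} {m : ι → ℚ}
    (hm : ∀ s, m s = rv s / r) (Λ : ι → Ptn) (b : Ptn)
    (_hb : ∀ k, b.conj k = ∑ s, (Λ s).conj k) :
    let θs : RatFunc K := schurElement Λ b (RatFunc.X ^ (r : ℤ)) fun s =>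
      RatFunc.C (ζ s) * RatFunc.X ^ rv s
    θs ≠ 0 ∧
      ∃ (v : ℤ) (a c : K[X]), a.coeff 0 ≠ 0 ∧ c.coeff 0 ≠ 0 ∧
        θs = RatFunc.X ^ v * (algebraMap K[X] (RatFunc K) a / algebraMap K[X] (RatFunc K) c) ∧
        (v : ℚ) = -(r * (b.nn - ∑ s, ∑ x ∈ (Λ s).nodes, ∑ t ∈ Finset.univ.erase s,
          min (ghook (Λ s) (Λ t) x.1 x.2 + m s - m t) 0)) := by
  intro θs
  have hX : (idealX K).valuation (RatFunc K) RatFunc.X < 1 := by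
    rw [valuation_X_eq_neg_one, ← WithZero.exp_zero, WithZero.exp_lt_exp]
    exact neg_one_lt_zero
  have hsep : Pairwise fun s t =>
      (idealX K).valuation (RatFunc K) (RatFunc.C (ζ s) - RatFunc.C (ζ t)) = 1 := fun s t hst => by
    simpa only [map_sub] using valuation_idealX_C (sub_ne_zero.mpr (hζ.ne hst))
  have hval := valuation_schurElement _ rv Λ b RatFunc.X_ne_zero hX hr
    (fun s => valuation_idealX_C (hζ₀ s)) hsep
  obtain ⟨a, c, ha, hc, h⟩ := exists_eq_X_zpow_mul_div_of_valuation_eq hval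
  have hθ : θs ≠ 0 := by
    rw [← Valuation.ne_zero_iff ((idealX K).valuation (RatFunc K)), hval]
    exact zpow_ne_zero _ ((Valuation.ne_zero_iff _).mpr RatFunc.X_ne_zero)
  exact ⟨hθ, _, a, c, ha, hc, h, by rw [Int.cast_neg, cast_aValue Λ b hr hm]⟩

end RatFunc

theorem etaRoot_ne_zero (l : ℕ) : etaRoot l ≠ 0 := Complex.exp_ne_zero _

theorem etaRoot_pow_injective (l : ℕ) : Function.Injective fun s : Fin l => etaRoot l ^ (s : ℕ) :=
  fun s t h => Fin.ext ((Complex.isPrimitiveRoot_exp l s.pos.ne').pow_inj s.2 t.2 h)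

/-- Substituting `q = u^r`, `Q_j = η_l^j u^{r_j}` into the
cancellation-free Schur element formula gives a nonzero rational function
`θ(s_λ) ∈ ℚ(η_l)(u) ⊆ ℂ(u)` whose `u`-adic valuation `v` (i.e. `θ(s_λ) = u^v·(a/c)` with
`a, c` polynomials of nonzero constant term) satisfies
`v = -r(n(λ̄) - Σ_s Σ_{(i,j)∈[λ^s]} Σ_{t≠s} min(h^{λ^s,λ^t}_{i,j} + m_s - m_t, 0))`,
where `m_s = r_s/r`; that is, the a-value `a^{(m,r)}(λ) = -v` equals
`r(n(λ̄) - Σ_s Σ_{(i,j)} Σ_{t≠s} min(h^{λ^s,λ^t}_{i,j} + m_s - m_t, 0))`. -/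
theorem stmt10 (l n r : ℕ) (hl : 0 < l) (hr : 0 < r) (rv : Fin l → ℤ)
    (m : Fin l → ℚ) (hm : ∀ s, m s = (rv s : ℚ) / (r : ℚ))
    (Λ : Fin l → Ptn) (hn : ∑ s, (Λ s).size = n)
    (b : Ptn) (hb : ∀ k, b.conj k = ∑ s, (Λ s).conj k) :
    let u : RatFunc ℂ := RatFunc.X
    let Qf : Fin l → RatFunc ℂ := fun s => RatFunc.C (etaRoot l ^ (s : ℕ)) * u ^ (rv s)
    let qf : RatFunc ℂ := u ^ (r : ℤ)
    let θs : RatFunc ℂ :=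
      (-1 : RatFunc ℂ) ^ (n * (l - 1)) * qf ^ (-(b.nn : ℤ)) * (qf - 1) ^ (-(n : ℤ)) *
        ∏ s, ∏ᶠ i, ∏ j ∈ Finset.range ((Λ s).parts i), ∏ t,
          (qf ^ (ghook (Λ s) (Λ t) i j) * Qf s * (Qf t)⁻¹ - 1)
    θs ≠ 0 ∧
      ∃ (v : ℤ) (a c : Polynomial ℂ), a.coeff 0 ≠ 0 ∧ c.coeff 0 ≠ 0 ∧
        θs = u ^ v * (algebraMap (Polynomial ℂ) (RatFunc ℂ) a /
            algebraMap (Polynomial ℂ) (RatFunc ℂ) c) ∧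
        (v : ℚ) = -((r : ℚ) * ((b.nn : ℚ) -
          ∑ s, ∑ᶠ i, ∑ j ∈ Finset.range ((Λ s).parts i), ∑ t ∈ Finset.univ.erase s,
            min (((ghook (Λ s) (Λ t) i j : ℤ) : ℚ) + m s - m t) 0)) := by
  subst hn
  simpa only [schurElement, Fintype.card_fin, Ptn.finprod_prod_range_parts,
    Ptn.finsum_sum_range_parts] using stmt10_general hr
      (fun s : Fin l => pow_ne_zero s (etaRoot_ne_zero l)) (etaRoot_pow_injective l) hm Λ b hb
end
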